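/- Let n ≥ 1 and r > 0. Let R : [0,1] × [0,r] → Mat_n(ℝ) be continuously differentiable with R(s,t) symmetric for every (s,t), and let S : [0,1] × [0,r] → Mat_n(ℝ) be twice continuously differentiable such that for every s ∈ [0,1]: ∂ₜ²S(s,t) + R(s,t)·S(s,t) = 0 for all t ∈ [0,r], S(s,0) = Id, and S(s,r) = 0. Then for every s ∈ [0,1], ∂ₛ(∂ₜS(s,0)) = ∫₀ʳ S(s,t)ᵀ · (∂ₛR(s,t)) · S(s,t) dt. -/

import Mathlib

/-!
The Wronskian is taken between `S(σ,·)` and `S(s,·)` for two different parameters, rather than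
between `∂ₛS` and `S`, so no mixed derivatives of `S` appear. With
`W(t) = ∂ₜS(σ,t)ᵀ S(s,t) - S(σ,t)ᵀ ∂ₜS(s,t)`, the Jacobi equation and the symmetry of `R` give
`W'(t) = -S(σ,t)ᵀ (R(σ,t) - R(s,t)) S(s,t)`. The boundary conditions give `W(r) = 0` and
`W(0) = ∂ₜS(σ,0)ᵀ - ∂ₜS(s,0)`, hence
`∂ₜS(σ,0)ᵀ - ∂ₜS(s,0) = ∫₀ʳ S(σ,t)ᵀ (R(σ,t) - R(s,t)) S(s,t) dt` (`wronskian_identity`).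
For `σ = s` this says that `∂ₜS(s,0)` is symmetric, so the transpose can be dropped. Dividing by
`σ - s` and letting `σ → s` under the integral sign (`hasDerivWithinAt_integral_increment`) yields
the formula.
-/

open Matrix MeasureTheory Set

/-- The dominated-convergence step, for scalar functions: the domination comes from the
compactness of `[0,1] × [0,r]` and the mean value inequality for `ρ(·,t)`. -/
lemma hasDerivWithinAt_integral_increment {r : ℝ} (hr : 0 < r) (a ρ ρs : ℝ → ℝ → ℝ) (b : ℝ → ℝ)
    (ha : ContinuousOn (fun p : ℝ × ℝ => a p.1 p.2) (Icc 0 1 ×ˢ Icc 0 r))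
    (hρ : ContinuousOn (fun p : ℝ × ℝ => ρ p.1 p.2) (Icc 0 1 ×ˢ Icc 0 r))
    (hρs : ContinuousOn (fun p : ℝ × ℝ => ρs p.1 p.2) (Icc 0 1 ×ˢ Icc 0 r))
    (hb : ContinuousOn b (Icc 0 r))
    (hd : ∀ s ∈ Icc (0:ℝ) 1, ∀ t ∈ Icc (0:ℝ) r,
      HasDerivWithinAt (fun σ => ρ σ t) (ρs s t) (Icc 0 1) s)
    {s : ℝ} (hs : s ∈ Icc (0:ℝ) 1) :
    HasDerivWithinAt (fun σ => ∫ t in (0:ℝ)..r, a σ t * (ρ σ t - ρ s t) * b t)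
      (∫ t in (0:ℝ)..r, a s t * ρs s t * b t) (Icc 0 1) s := by
  have hK : IsCompact (Icc (0:ℝ) 1 ×ˢ Icc (0:ℝ) r) := isCompact_Icc.prod isCompact_Icc
  obtain ⟨A, hA⟩ := hK.exists_bound_of_continuousOn ha
  obtain ⟨L, hL⟩ := hK.exists_bound_of_continuousOn hρs
  obtain ⟨B, hB⟩ := isCompact_Icc.exists_bound_of_continuousOn hb
  have slice : ∀ {f : ℝ → ℝ → ℝ} {σ : ℝ}, σ ∈ Icc (0:ℝ) 1 →
      ContinuousOn (fun p : ℝ × ℝ => f p.1 p.2) (Icc 0 1 ×ˢ Icc 0 r) →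
      ContinuousOn (fun t => f σ t) (Icc 0 r) := fun {f σ} hσ hf =>
    hf.comp (f := fun t => (σ, t)) (by fun_prop) fun t ht => ⟨hσ, ht⟩
  have hsub : uIoc 0 r ⊆ Icc 0 r := by
    rw [uIoc_of_le hr.le]; exact Ioc_subset_Icc_self
  rw [hasDerivWithinAt_iff_tendsto_slope]
  have hmem : ∀ᶠ σ in nhdsWithin s (Icc 0 1 \ {s}), σ ∈ Icc (0:ℝ) 1 \ {s} :=
    eventually_mem_nhdsWithin
  have key : Filter.Tendsto
      (fun σ => ∫ t in (0:ℝ)..r, a σ t * slope (fun σ => ρ σ t) s σ * b t)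
      (nhdsWithin s (Icc 0 1 \ {s})) (nhds (∫ t in (0:ℝ)..r, a s t * ρs s t * b t)) := by
    apply intervalIntegral.tendsto_integral_filter_of_dominated_convergence
      (fun _ => A * L * B)
    · filter_upwards [hmem] with σ hσ
      refine ContinuousOn.aestronglyMeasurable ?_ measurableSet_uIoc
      refine ContinuousOn.mono ?_ hsub
      simp only [slope_def_field]
      exact ((slice hσ.1 ha).mul (((slice hσ.1 hρ).sub (slice hs hρ)).div_const _)).mul hb
    · filter_upwards [hmem] with σ hσ
      refine Filter.Eventually.of_forall fun t ht => ?_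
      have ht := hsub ht
      have h1 := hA (σ, t) ⟨hσ.1, ht⟩
      have h2 := hB t ht
      have h3 : ‖slope (fun σ => ρ σ t) s σ‖ ≤ L := by
        have hmv := (convex_Icc (0:ℝ) 1).norm_image_sub_le_of_norm_hasDerivWithin_le
          (fun x hx => hd x hx t ht) (fun x hx => hL (x, t) ⟨hx, ht⟩) hs hσ.1
        rw [slope_def_field, norm_div]
        exact (div_le_iff₀ (norm_pos_iff.2 (sub_ne_zero.2 hσ.2))).2 hmv
      rw [norm_mul, norm_mul]
      have hA0 := (norm_nonneg _).trans h1
      have hL0 := (norm_nonneg _).trans h3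
      dsimp only at h1
      gcongr
    · exact intervalIntegrable_const
    · refine Filter.Eventually.of_forall fun t ht => ?_
      have ht := hsub ht
      have h1 : Filter.Tendsto (fun σ => a σ t) (nhdsWithin s (Icc 0 1 \ {s}))
          (nhds (a s t)) := by
        have hc : ContinuousOn (fun σ => a σ t) (Icc 0 1) :=
          ha.comp (f := fun σ => (σ, t)) (by fun_prop) fun σ hσ => ⟨hσ, ht⟩
        exact (hc s hs).mono_left (nhdsWithin_mono _ sdiff_subset)
      exact (h1.mul (hasDerivWithinAt_iff_tendsto_slope.1 (hd s hs t ht))).mul_const _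
  refine key.congr fun σ => ?_
  simp only [slope_def_field, sub_self, mul_zero, zero_mul, intervalIntegral.integral_zero, sub_zero,
    ← intervalIntegral.integral_div]
  exact intervalIntegral.integral_congr fun t _ => by ring

lemma intervalIntegrable_fun_sum {n : ℕ} {a b : ℝ} {f : Fin n → ℝ → ℝ}
    (h : ∀ k, IntervalIntegrable (f k) volume a b) :
    IntervalIntegrable (fun t => ∑ k, f k t) volume a b := by
  have := IntervalIntegrable.sum Finset.univ fun k _ => h k
  rwa [Finset.sum_fn] at this

/-- The Wronskian of two solutions of Jacobi equations with coefficients `R₁` (symmetric) and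
`R₂` and boundary values `Id` at `0` and `0` at `r`: its derivative integrated over `[0,r]`. Only
the first coefficient gets transposed in the Wronskian, so only its symmetry matters. -/
lemma wronskian_identity {n : ℕ} {r : ℝ} (hr : 0 < r)
    (R₁ R₂ S₁ S₂ T₁ T₂ U₁ U₂ : ℝ → Matrix (Fin n) (Fin n) ℝ)
    (hR₁ : ∀ i j, ContinuousOn (fun t => R₁ t i j) (Icc 0 r))
    (hR₂ : ∀ i j, ContinuousOn (fun t => R₂ t i j) (Icc 0 r))
    (hsymm : ∀ t ∈ Icc (0:ℝ) r, (R₁ t).IsSymm)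
    (hS₁ : ∀ t ∈ Icc (0:ℝ) r, ∀ i j,
      HasDerivWithinAt (fun τ => S₁ τ i j) (T₁ t i j) (Icc 0 r) t)
    (hS₂ : ∀ t ∈ Icc (0:ℝ) r, ∀ i j,
      HasDerivWithinAt (fun τ => S₂ τ i j) (T₂ t i j) (Icc 0 r) t)
    (hT₁ : ∀ t ∈ Icc (0:ℝ) r, ∀ i j,
      HasDerivWithinAt (fun τ => T₁ τ i j) (U₁ t i j) (Icc 0 r) t)
    (hT₂ : ∀ t ∈ Icc (0:ℝ) r, ∀ i j,
      HasDerivWithinAt (fun τ => T₂ τ i j) (U₂ t i j) (Icc 0 r) t)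
    (hJ₁ : ∀ t ∈ Icc (0:ℝ) r, U₁ t + R₁ t * S₁ t = 0)
    (hJ₂ : ∀ t ∈ Icc (0:ℝ) r, U₂ t + R₂ t * S₂ t = 0)
    (h01 : S₁ 0 = 1) (h02 : S₂ 0 = 1) (hr1 : S₁ r = 0) (hr2 : S₂ r = 0) (i j : Fin n) :
    T₁ 0 j i - T₂ 0 i j =
      ∑ k, ∑ l, ∫ t in (0:ℝ)..r, S₁ t k i * (R₁ t k l - R₂ t k l) * S₂ t l j := by
  have cS₁ : ∀ i j, ContinuousOn (fun t => S₁ t i j) (Icc 0 r) := fun i j t ht =>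
    (hS₁ t ht i j).continuousWithinAt
  have cS₂ : ∀ i j, ContinuousOn (fun t => S₂ t i j) (Icc 0 r) := fun i j t ht =>
    (hS₂ t ht i j).continuousWithinAt
  have hint : ∀ k l, IntervalIntegrable
      (fun t => S₁ t k i * (R₁ t k l - R₂ t k l) * S₂ t l j) volume 0 r := fun k l => by
    apply ContinuousOn.intervalIntegrable
    rw [uIcc_of_le hr.le]
    exact ((cS₁ k i).mul ((hR₁ k l).sub (hR₂ k l))).mul (cS₂ l j)
  have hderiv : ∀ t ∈ Icc (0:ℝ) r, HasDerivWithinAt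
      (fun t => ∑ k, (S₁ t k i * T₂ t k j - T₁ t k i * S₂ t k j))
      (∑ k, ∑ l, S₁ t k i * (R₁ t k l - R₂ t k l) * S₂ t l j) (Icc 0 r) t := by
    intro t ht
    have h : HasDerivWithinAt
      (fun t => ∑ k, (S₁ t k i * T₂ t k j - T₁ t k i * S₂ t k j)) _ (Icc 0 r) t :=
      HasDerivWithinAt.fun_sum (u := Finset.univ) fun k _ =>
        ((hS₁ t ht k i).mul (hT₂ t ht k j)).sub ((hT₁ t ht k i).mul (hS₂ t ht k j))
    convert h using 1
    have e1 : U₁ t = -(R₁ t * S₁ t) := eq_neg_of_add_eq_zero_left (hJ₁ t ht)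
    have e2 : U₂ t = -(R₂ t * S₂ t) := eq_neg_of_add_eq_zero_left (hJ₂ t ht)
    have hs := hsymm t ht
    have hmat : (S₁ t)ᵀ * (R₁ t - R₂ t) * S₂ t = (S₁ t)ᵀ * U₂ t - (U₁ t)ᵀ * S₂ t := by
      rw [e1, e2, transpose_neg, transpose_mul, hs.eq]
      noncomm_ring
    have hij := congrFun (congrFun hmat i) j
    rw [Matrix.mul_assoc] at hij
    simp only [Matrix.mul_apply, Matrix.sub_apply, transpose_apply, Finset.mul_sum,
      ← mul_assoc] at hij
    rw [hij, ← Finset.sum_sub_distrib]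
    exact Finset.sum_congr rfl fun k _ => by ring
  have hftc := intervalIntegral.integral_eq_sub_of_hasDerivAt_of_le hr.le
    (fun t ht => (hderiv t ht).continuousWithinAt)
    (fun t ht => (hderiv t (Ioo_subset_Icc_self ht)).hasDerivAt (Icc_mem_nhds ht.1 ht.2))
    (intervalIntegrable_fun_sum fun k => intervalIntegrable_fun_sum fun l => hint k l)
  rw [intervalIntegral.integral_finsetSum fun k _ =>
    intervalIntegrable_fun_sum fun l => hint k l] at hftc
  simp only [intervalIntegral.integral_finsetSum fun l _ => hint _ l] at hftc
  rw [hftc]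
  simp [h01, h02, hr1, hr2, Matrix.one_apply, Finset.sum_sub_distrib]

/-- key step of the Hopf-type formula (Proposition 2.2).
Under the same hypotheses as in the stable Hopf formula, for every `s ∈ [0,1]`
the map `s ↦ ∂ₜS(s,0)` is differentiable with
`∂ₛ(∂ₜS(s,0)) = ∫₀ʳ S(s,t)ᵀ · (∂ₛR(s,t)) · S(s,t) dt` (entrywise). -/
theorem hopf_formula_derivative_step (n : ℕ) (hn : 1 ≤ n) (r : ℝ) (hr : 0 < r)
    (R S St Stt Rs : ℝ → ℝ → Matrix (Fin n) (Fin n) ℝ)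
    -- R is continuously differentiable on [0,1] × [0,r], with s-partial Rs
    (hR_cd : ∀ i j, ContDiffOn ℝ 1 (fun p : ℝ × ℝ => R p.1 p.2 i j)
      (Icc 0 1 ×ˢ Icc 0 r))
    (hRs : ∀ s ∈ Icc (0:ℝ) 1, ∀ t ∈ Icc (0:ℝ) r, ∀ i j,
      HasDerivWithinAt (fun σ => R σ t i j) (Rs s t i j) (Icc 0 1) s)
    (hRs_cont : ∀ i j, ContinuousOn (fun p : ℝ × ℝ => Rs p.1 p.2 i j)
      (Icc 0 1 ×ˢ Icc 0 r))
    -- R(s,t) is symmetric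
    (hR_symm : ∀ s ∈ Icc (0:ℝ) 1, ∀ t ∈ Icc (0:ℝ) r, (R s t).IsSymm)
    -- S is twice continuously differentiable on [0,1] × [0,r],
    -- with first and second t-partials St and Stt
    (hS_cd : ∀ i j, ContDiffOn ℝ 2 (fun p : ℝ × ℝ => S p.1 p.2 i j)
      (Icc 0 1 ×ˢ Icc 0 r))
    (hSt : ∀ s ∈ Icc (0:ℝ) 1, ∀ t ∈ Icc (0:ℝ) r, ∀ i j,
      HasDerivWithinAt (fun τ => S s τ i j) (St s t i j) (Icc 0 r) t)
    (hStt : ∀ s ∈ Icc (0:ℝ) 1, ∀ t ∈ Icc (0:ℝ) r, ∀ i j,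
      HasDerivWithinAt (fun τ => St s τ i j) (Stt s t i j) (Icc 0 r) t)
    -- the Jacobi equation and the boundary conditions
    (hJac : ∀ s ∈ Icc (0:ℝ) 1, ∀ t ∈ Icc (0:ℝ) r, Stt s t + R s t * S s t = 0)
    (hS0 : ∀ s ∈ Icc (0:ℝ) 1, S s 0 = 1)
    (hSr : ∀ s ∈ Icc (0:ℝ) 1, S s r = 0) :
    ∀ s ∈ Icc (0:ℝ) 1, ∀ i j,
      HasDerivWithinAt (fun σ => St σ 0 i j)
        (∫ t in (0:ℝ)..r, ((S s t)ᵀ * Rs s t * S s t) i j) (Icc 0 1) s := by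
  have slice : ∀ {f : ℝ → ℝ → ℝ} {σ : ℝ}, σ ∈ Icc (0:ℝ) 1 →
      ContinuousOn (fun p : ℝ × ℝ => f p.1 p.2) (Icc 0 1 ×ˢ Icc 0 r) →
      ContinuousOn (fun t => f σ t) (Icc 0 r) := fun {f σ} hσ hf =>
    hf.comp (f := fun t => (σ, t)) (by fun_prop) fun t ht => ⟨hσ, ht⟩
  have hW : ∀ s ∈ Icc (0:ℝ) 1, ∀ σ ∈ Icc (0:ℝ) 1, ∀ i j, St σ 0 j i - St s 0 i j =
      ∑ k, ∑ l, ∫ t in (0:ℝ)..r, S σ t k i * (R σ t k l - R s t k l) * S s t l j :=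
    fun s hs σ hσ i j => wronskian_identity hr (R σ) (R s) (S σ) (S s) (St σ) (St s)
      (Stt σ) (Stt s)
      (fun i j => slice (f := fun s t => R s t i j) hσ (hR_cd i j).continuousOn)
      (fun i j => slice (f := fun s t => R s t i j) hs (hR_cd i j).continuousOn)
      (hR_symm σ hσ) (hSt σ hσ) (hSt s hs) (hStt σ hσ) (hStt s hs) (hJac σ hσ) (hJac s hs)
      (hS0 σ hσ) (hS0 s hs) (hSr σ hσ) (hSr s hs) i j
  have hsym : ∀ σ ∈ Icc (0:ℝ) 1, ∀ i j, St σ 0 j i = St σ 0 i j := fun σ hσ i j => by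
    simpa [sub_eq_zero] using hW σ hσ σ hσ i j
  intro s hs i j
  have hD := HasDerivWithinAt.fun_sum (u := Finset.univ) fun k _ =>
    HasDerivWithinAt.fun_sum (u := Finset.univ) fun l _ =>
      hasDerivWithinAt_integral_increment hr (fun s t => S s t k i) (fun s t => R s t k l)
        (fun s t => Rs s t k l) (fun t => S s t l j) (hS_cd k i).continuousOn
        (hR_cd k l).continuousOn (hRs_cont k l)
        (slice (f := fun s t => S s t l j) hs (hS_cd l j).continuousOn)
        (fun s hs t ht => hRs s hs t ht k l) hs
  have hint : ∀ k l, IntervalIntegrable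
      (fun t => S s t k i * Rs s t k l * S s t l j) volume 0 r := fun k l => by
    apply ContinuousOn.intervalIntegrable
    rw [uIcc_of_le hr.le]
    exact ((slice (f := fun s t => S s t k i) hs (hS_cd k i).continuousOn).mul
      (slice (f := fun s t => Rs s t k l) hs (hRs_cont k l))).mul
      (slice (f := fun s t => S s t l j) hs (hS_cd l j).continuousOn)
  have hval : ∫ t in (0:ℝ)..r, ((S s t)ᵀ * Rs s t * S s t) i j =
      ∑ k, ∑ l, ∫ t in (0:ℝ)..r, S s t k i * Rs s t k l * S s t l j := by
    simp only [← intervalIntegral.integral_finsetSum fun l _ => hint _ l]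
    rw [← intervalIntegral.integral_finsetSum fun k _ =>
    intervalIntegrable_fun_sum fun l => hint k l]
    congr 1
    ext t
    rw [Matrix.mul_assoc]
    simp only [Matrix.mul_apply, transpose_apply, Finset.mul_sum, ← mul_assoc]
  rw [hval]
  refine (hD.const_add (St s 0 i j)).congr_of_mem (fun σ hσ => ?_) hs
  rw [← hW s hs σ hσ i j, hsym σ hσ i j]
  ring
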